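/- In the Kummer setting, let P = P_∞, Q_i = P_{α_i,0} for i = 1,…,t (1 ≤ t ≤ r), let β = (β_1,…,β_t) ∈ Z^t with β_1+⋯+β_t ≥ 0, let D = Σ_{i=t+1}^r P_{α_i,0} + Σ_{i=r+1}^{r_1} Σ_{P̃|R_i} P̃, n = deg D, and assume n ≥ 2g. Let r̃ be the inverse of r modulo m. Then a ∈ Ĥ*_β if and only if: (i) when 0 ≤ a + Σ_{i=1}^t β_i < n, one has Σ_{i=1}^t ⌊(β_i+j)/m⌋ ≥ (rj−a)/m, where j is the residue of r̃a modulo m; (ii) when n ≤ a + Σ_{i=1}^t β_i ≤ n+2g−1, one has Σ_{i=1}^t ⌊(β_i+j+1)/m⌋ < (rj+n+t−a)/m, where j is the residue of r̃(a−n−t) modulo m. -/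

import Mathlib

/-!
Throughout, `a` is called a pole order for `G` to mean that some nonzero function has pole order exactly `a`
at `P_∞` and satisfies the conditions of `L(G)` at all other places (`Data.HasPole`).

*Reduction to pole orders.* The code grows from `a - 1` to `a` iff `a` is a pole order for `G_β` but
not for `G_β - D` (`Data.mem_HhatS_iff`): a function with exact pole order `a` vanishing on `D`
absorbs the leading coefficient of every other function in `L(aP_∞ + G_β)`.

*Pole orders for `G_β`.* With `r j ≡ a` modulo `m` and `0 ≤ j < m`, the integer `a` is a pole order
for `G_β` iff the floor condition `r j - a ≤ m ∑ ⌊(βᵢ + j) / m⌋` holds (`KummerData.hasPole_iff`).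
If it holds, a product of powers of `y` and the `x - αᵢ` does the job
(`KummerData.hasPole_of_cond`). If it fails, it holds for the reflected data
`(2g - 1 - a, -β, m - 1 - j)` (`cond_reflect`), so a function for `(a, β)` times one for the
reflected data would have its only pole at `P_∞`, of order `2g - 1`. This is impossible: by the same
reflection with `β = 0`, one of `a`, `2g - 1 - a` is always a pole order for `0`, and if `2g - 1`
were one as well there would be more than `g` of them in `[0, 2g)`, whereas `ℓ((2g - 1)P_∞) = g` by
Riemann-Roch (`KummerData.not_hasPole_two_genus_sub_one`). No description of `F` as `Fq(x, y)` is
needed.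

*The two ranges.* If `a + ∑ βᵢ < n`, there is no pole order for `G_β - D`, for degree reasons. If
`a + ∑ βᵢ ≥ n ≥ 2g`, then `a` is a pole order for `G_β`, since the reflected data has negative
degree; and as `y ∏ (x - γⱼ)` has divisor `D + ∑ Qᵢ - (n + t)P_∞` (sum over `i ≤ t`), `a` is a pole
order for `G_β - D` iff `a - n - t` is one for `G_{β+1}` (`KummerData.hasPole_sub_D_iff`).
-/

open scoped BigOperators Classical

noncomputable section

namespace AGCodes

/-- An algebraic function field `F` of one variable over the finite field `Fq`,
presented together with its set of places, discrete valuations, degrees of places,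
genus, Riemann-Roch spaces, a canonical divisor, evaluation (residue) maps at
rational places, and the basic axioms these satisfy (including the Riemann-Roch
theorem). Divisors are finitely supported `ℤ`-valued functions on places. -/
structure Data (Fq F Place : Type*) [Field Fq] [Fintype Fq] [Field F] [Algebra Fq F] where
  /-- the (normalized, additive) discrete valuation at each place; by convention `v P 0 = 0` -/
  v : Place → F → ℤ
  /-- the degree of a place -/
  degP : Place → ℕ
  /-- the genus of the function field -/
  genus : ℕ
  /-- the Riemann-Roch space `L(D)` of a divisor `D` -/
  RR : (Place →₀ ℤ) → Submodule Fq F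
  /-- evaluation (residue) of a function at a place; meaningful at rational places
  for functions with no pole there -/
  ev : Place → F → Fq
  /-- a fixed canonical divisor -/
  Kdiv : Place →₀ ℤ
  degP_pos : ∀ P, 0 < degP P
  v_zero : ∀ P, v P 0 = 0
  v_mul : ∀ P (f g : F), f ≠ 0 → g ≠ 0 → v P (f * g) = v P f + v P g
  v_add : ∀ P (f g : F), f ≠ 0 → g ≠ 0 → f + g ≠ 0 → min (v P f) (v P g) ≤ v P (f + g)
  v_algebraMap : ∀ P (c : Fq), c ≠ 0 → v P (algebraMap Fq F c) = 0
  v_exists_uniformizer : ∀ P : Place, ∃ f : F, f ≠ 0 ∧ v P f = 1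
  v_support_finite : ∀ f : F, f ≠ 0 → {P : Place | v P f ≠ 0}.Finite
  /-- `Fq` is the full constant field: functions with no poles are constants -/
  const_of_no_poles : ∀ f : F, f ≠ 0 → (∀ P, 0 ≤ v P f) → ∃ c : Fq, f = algebraMap Fq F c
  /-- principal divisors have degree zero -/
  deg_principal : ∀ f : F, f ≠ 0 → ∑ᶠ P : Place, v P f * degP P = 0
  mem_RR : ∀ (D : Place →₀ ℤ) (f : F), f ∈ RR D ↔ f = 0 ∨ ∀ P, 0 ≤ v P f + D P
  rr_findim : ∀ D : Place →₀ ℤ, FiniteDimensional Fq (RR D)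
  /-- the Riemann-Roch theorem -/
  riemann_roch : ∀ D : Place →₀ ℤ,
    (Module.finrank Fq (RR D) : ℤ)
      = (D.sum fun P k => k * degP P) + 1 - genus
        + Module.finrank Fq (RR (Kdiv - D))
  ev_algebraMap : ∀ (P : Place) (c : Fq), ev P (algebraMap Fq F c) = c
  ev_add : ∀ (P : Place) (f g : F), degP P = 1 →
    (f = 0 ∨ 0 ≤ v P f) → (g = 0 ∨ 0 ≤ v P g) → ev P (f + g) = ev P f + ev P g
  ev_mul : ∀ (P : Place) (f g : F), degP P = 1 →
    (f = 0 ∨ 0 ≤ v P f) → (g = 0 ∨ 0 ≤ v P g) → ev P (f * g) = ev P f * ev P g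
  ev_eq_zero_iff : ∀ (P : Place) (f : F), degP P = 1 → f ≠ 0 → 0 ≤ v P f →
    (ev P f = 0 ↔ 1 ≤ v P f)

variable {Fq F Place : Type*} [Field Fq] [Fintype Fq] [Field F] [Algebra Fq F]

/-- The divisor `β₁Q₁ + ⋯ + β_tQ_t`. -/
def Gdiv {t : ℕ} (Q : Fin t → Place) (β : Fin t → ℤ) : Place →₀ ℤ :=
  ∑ i, Finsupp.single (Q i) (β i)

/-- The divisor `P₁ + ⋯ + P_n` attached to a tuple of places. -/
def Ddiv {n : ℕ} (PP : Fin n → Place) : Place →₀ ℤ :=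
  ∑ j, Finsupp.single (PP j) 1

namespace Data

variable (X : Data Fq F Place)

/-- The degree of a divisor. -/
def divDeg (D : Place →₀ ℤ) : ℤ := D.sum fun P k => k * X.degP P

/-- `ℓ(D)`, the dimension of the Riemann-Roch space of `D`. -/
def ell (D : Place →₀ ℤ) : ℕ := Module.finrank Fq (X.RR D)

/-- A place is rational if it has degree one. -/
def IsRational (P : Place) : Prop := X.degP P = 1

/-- A divisor is canonical iff it has degree `2g-2` and `ℓ = g`. -/
def IsCanonical (W : Place →₀ ℤ) : Prop :=
  X.divDeg W = 2 * (X.genus : ℤ) - 2 ∧ X.ell W = X.genus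

/-- The generalized Weierstrass semigroup `Ĥ(Q₁,…,Q_t)`: vectors
`(-v_{Q₁}(h),…,-v_{Q_t}(h))` for `h ≠ 0` regular outside `{Q₁,…,Q_t}`. -/
def Hhat {t : ℕ} (Q : Fin t → Place) : Set (Fin t → ℤ) :=
  {α | ∃ h : F, h ≠ 0 ∧ (∀ P : Place, (∀ i, P ≠ Q i) → 0 ≤ X.v P h) ∧
    ∀ i, α i = - X.v (Q i) h}

/-- The classical Weierstrass semigroup `H(P) = {a ∈ ℕ : ∃ z, (z)_∞ = aP}`
(viewed inside `ℤ`). -/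
def Hone (P : Place) : Set ℤ :=
  {a | 0 ≤ a ∧ ∃ h : F, h ≠ 0 ∧ (∀ R : Place, R ≠ P → 0 ≤ X.v R h) ∧ X.v P h = -a}

/-- `Ĥ_β = {a ∈ ℤ : ℓ(aP + G_β) ≠ ℓ((a-1)P + G_β)}`. -/
def HhatB (P : Place) {t : ℕ} (Q : Fin t → Place) (β : Fin t → ℤ) : Set ℤ :=
  {a | X.ell (Finsupp.single P a + Gdiv Q β) ≠ X.ell (Finsupp.single P (a-1) + Gdiv Q β)}

/-- The algebraic geometry (evaluation) code `C_L(D, G)` attached to the tuple of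
places `PP` (determining `D = P₁ + ⋯ + P_n`) and the divisor `G`. -/
def code {n : ℕ} (PP : Fin n → Place) (G : Place →₀ ℤ) : Set (Fin n → Fq) :=
  {w | ∃ z ∈ X.RR G, ∀ i, w i = X.ev (PP i) z}

/-- The dimension of the code `C_L(D, G)`. -/
def codeDim {n : ℕ} (PP : Fin n → Place) (G : Place →₀ ℤ) : ℕ :=
  Module.finrank Fq (Submodule.span Fq (X.code PP G))

/-- `Ĥ*_β = {a ∈ ℤ : C_L(D, aP+G_β) ≠ C_L(D, (a-1)P+G_β)}`. -/
def HhatS {n : ℕ} (PP : Fin n → Place) (P : Place) {t : ℕ} (Q : Fin t → Place)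
    (β : Fin t → ℤ) : Set ℤ :=
  {a | X.code PP (Finsupp.single P a + Gdiv Q β)
      ≠ X.code PP (Finsupp.single P (a-1) + Gdiv Q β)}

end Data

/-- The dual code with respect to the standard inner product. -/
def dualCode {n : ℕ} (C : Set (Fin n → Fq)) : Set (Fin n → Fq) :=
  {y | ∀ c ∈ C, ∑ i, y i * c i = 0}

/-- The isometric code `x · C = {(x₁c₁,…,x_nc_n) : c ∈ C}`. -/
def scaleCode {n : ℕ} (x : Fin n → Fq) (C : Set (Fin n → Fq)) : Set (Fin n → Fq) :=
  (fun c => fun i => x i * c i) '' C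

/-- A flag of codes `C₀, C₁, …, C_s` is `x`-isometry-dual if `x` has all coordinates
nonzero and `C_i = x · C_{s-i}^⊥` for all `i`. -/
def IsIsometryDualFlag {n s : ℕ} (C : Fin (s+1) → Set (Fin n → Fq))
    (x : Fin n → Fq) : Prop :=
  (∀ i, x i ≠ 0) ∧ ∀ i, C i = scaleCode x (dualCode (C (Fin.rev i)))

end AGCodes

namespace AGCodes

/-- A Kummer extension `F/Fq` defined by `y^m = f(x) = ∏ (x - αᵢ)` with
`f` separable of degree `r`, `2 ≤ r ≤ m-1`, `gcd(m,r)=1`, together with the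
totally ramified places `Q_i = P_{αᵢ,0}`, the place at infinity `P_∞`, and
completely split rational places of `Fq(x)` with the places of `F` above them. -/
structure KummerData (Fq F Place : Type*) [Field Fq] [Fintype Fq] [Field F]
    [Algebra Fq F] extends Data Fq F Place where
  m : ℕ
  r : ℕ
  r1 : ℕ
  x : F
  y : F
  α : Fin r → Fq
  two_le_r : 2 ≤ r
  r_lt_m : r < m
  coprime : Nat.Coprime m r
  α_inj : Function.Injective α
  /-- the defining equation `y^m = ∏ (x - αᵢ)` -/
  eqn : y ^ m = ∏ i, (x - algebraMap Fq F (α i))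
  /-- the unique place at infinity -/
  Pinf : Place
  /-- `Q i = P_{αᵢ,0}`, the unique (totally ramified) place above the zero of `x - αᵢ` -/
  Q : Fin r → Place
  Pinf_rational : degP Pinf = 1
  Q_rational : ∀ i, degP (Q i) = 1
  Q_inj : Function.Injective Q
  Q_ne_Pinf : ∀ i, Q i ≠ Pinf
  /-- the genus is `g = (m-1)(r-1)/2` -/
  genus_eq : 2 * genus = (m - 1) * (r - 1)
  /-- the divisor of `x - αᵢ` is `m Q_i - m P_∞` -/
  v_x_sub_alpha : ∀ (i : Fin r) (P : Place),
    v P (x - algebraMap Fq F (α i)) =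
      if P = Q i then (m : ℤ) else if P = Pinf then -(m : ℤ) else 0
  /-- the divisor of `y` is `Q₁ + ⋯ + Q_r - r P_∞` -/
  v_y : ∀ P : Place, v P y =
    if P = Pinf then -(r : ℤ) else if ∃ i, P = Q i then 1 else 0
  r_le_r1 : r ≤ r1
  /-- `γ j` are the elements of `Fq` whose corresponding places
  `R_{r+1},…,R_{r₁}` of `Fq(x)` split completely in `F/Fq(x)` -/
  γ : Fin (r1 - r) → Fq
  γ_inj : Function.Injective γ
  γ_ne_α : ∀ j i, γ j ≠ α i
  /-- `S j k`, `k = 0,…,m-1`, are the `m` places of `F` above `R_{r+1+j}` -/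
  S : Fin (r1 - r) → Fin m → Place
  S_rational : ∀ j k, degP (S j k) = 1
  S_inj : Function.Injective fun p : Fin (r1 - r) × Fin m => S p.1 p.2
  S_ne_Pinf : ∀ j k, S j k ≠ Pinf
  S_ne_Q : ∀ j k i, S j k ≠ Q i
  /-- the divisor of `x - γⱼ` is `∑ₖ S j k - m P_∞`; in particular the `S j k`
  are exactly the places above the zero of `x - γⱼ`, each unramified -/
  v_x_sub_gamma : ∀ (j : Fin (r1 - r)) (P : Place),
    v P (x - algebraMap Fq F (γ j)) =
      if ∃ k, P = S j k then 1 else if P = Pinf then -(m : ℤ) else 0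

namespace KummerData

variable {Fq F Place : Type*} [Field Fq] [Fintype Fq] [Field F] [Algebra Fq F]
variable (X : KummerData Fq F Place)

/-- The tuple of the `n = (r-t) + (r₁-r)m` places
`Q_{t+1},…,Q_r, (places above the split `R_i`)` supporting the divisor
`D = Σ_{i=t+1}^r Q_i + Σ_{i=r+1}^{r₁} Σ_{P̃∣R_i} P̃`. -/
def Dtuple (t : ℕ) (ht : t ≤ X.r) :
    Fin ((X.r - t) + (X.r1 - X.r) * X.m) → Place :=
  Fin.append (fun i : Fin (X.r - t) => X.Q ⟨t + i.1, by have := i.2; omega⟩)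
    (fun j : Fin ((X.r1 - X.r) * X.m) =>
      X.S (finProdFinEquiv.symm j).1 (finProdFinEquiv.symm j).2)

/-- The first `t` of the places `Q_i`. -/
def Qt (t : ℕ) (ht : t ≤ X.r) : Fin t → Place :=
  fun i => X.Q ⟨i.1, by have := i.2; omega⟩

end KummerData

end AGCodes

open AGCodes

namespace AGCodes

variable {Fq F Place : Type*} [Field Fq] [Fintype Fq] [Field F] [Algebra Fq F]

namespace Data

variable (X : Data Fq F Place)

/-! ### Valuations and degrees -/

lemma v_one (P : Place) : X.v P 1 = 0 := by
  have := X.v_algebraMap P 1 one_ne_zero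
  simpa using this

lemma v_inv (P : Place) {f : F} (hf : f ≠ 0) : X.v P f⁻¹ = - X.v P f := by
  have h := X.v_mul P f f⁻¹ hf (inv_ne_zero hf)
  rw [mul_inv_cancel₀ hf, v_one] at h
  omega

lemma v_pow (P : Place) {f : F} (hf : f ≠ 0) (k : ℕ) : X.v P (f ^ k) = k * X.v P f := by
  induction k with
  | zero => simp [v_one]
  | succ k ih =>
    rw [pow_succ, X.v_mul P _ _ (pow_ne_zero k hf) hf, ih]
    push_cast
    ring

lemma v_zpow (P : Place) {f : F} (hf : f ≠ 0) (k : ℤ) : X.v P (f ^ k) = k * X.v P f := by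
  obtain ⟨n, rfl | rfl⟩ := k.eq_nat_or_neg
  · rw [zpow_natCast, X.v_pow P hf]
  · rw [zpow_neg, zpow_natCast, X.v_inv P (pow_ne_zero n hf), X.v_pow P hf]
    ring

lemma v_prod (P : Place) {ι : Type*} (s : Finset ι) (f : ι → F) (hf : ∀ i, f i ≠ 0) :
    X.v P (∏ i ∈ s, f i) = ∑ i ∈ s, X.v P (f i) := by
  induction s using Finset.induction_on with
  | empty => simp [v_one]
  | insert i s hi ih =>
    rw [Finset.prod_insert hi, Finset.sum_insert hi,
      X.v_mul P _ _ (hf i) (Finset.prod_ne_zero_iff.2 fun j _ => hf j), ih]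

lemma divDeg_add (D E : Place →₀ ℤ) : X.divDeg (D + E) = X.divDeg D + X.divDeg E := by
  unfold divDeg
  exact Finsupp.sum_add_index' (by simp) (by intros; ring)

lemma divDeg_single (P : Place) (k : ℤ) : X.divDeg (Finsupp.single P k) = k * X.degP P := by
  unfold divDeg
  exact Finsupp.sum_single_index (by simp)

lemma divDeg_neg (D : Place →₀ ℤ) : X.divDeg (-D) = - X.divDeg D := by
  have h := X.divDeg_add D (-D)
  have h0 : X.divDeg 0 = 0 := by simp [divDeg]
  rw [add_neg_cancel, h0] at h
  omega

lemma divDeg_sum {ι : Type*} (s : Finset ι) (D : ι → Place →₀ ℤ) :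
    X.divDeg (∑ i ∈ s, D i) = ∑ i ∈ s, X.divDeg (D i) := by
  induction s using Finset.induction_on with
  | empty => simp [divDeg]
  | insert i s hi ih => rw [Finset.sum_insert hi, Finset.sum_insert hi, divDeg_add, ih]

lemma divDeg_Gdiv {t : ℕ} (Q : Fin t → Place) (hQ : ∀ i, X.degP (Q i) = 1) (β : Fin t → ℤ) :
    X.divDeg (Gdiv Q β) = ∑ i, β i := by
  simp [Gdiv, divDeg_sum, divDeg_single, hQ]

lemma divDeg_Ddiv {n : ℕ} (PP : Fin n → Place) (hP : ∀ i, X.degP (PP i) = 1) :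
    X.divDeg (Ddiv PP) = n := by
  simp [Ddiv, divDeg_sum, divDeg_single, hP]

/-- A nonzero `f ∈ L(D)` forces `deg D ≥ 0`. -/
lemma divDeg_nonneg (D : Place →₀ ℤ) {f : F} (hf : f ≠ 0) (h : ∀ R, 0 ≤ X.v R f + D R) :
    0 ≤ X.divDeg D := by
  have hfin := X.v_support_finite f hf
  set s : Finset Place := hfin.toFinset ∪ D.support with hs
  have h1 : ∑ P ∈ s, X.v P f * X.degP P = 0 := by
    rw [← X.deg_principal f hf, finsum_eq_sum_of_support_subset]
    intro P hP
    have : X.v P f ≠ 0 := fun h0 => hP (by simp [h0])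
    simp [hs, this]
  have h2 : X.divDeg D = ∑ P ∈ s, D P * X.degP P := by
    unfold divDeg
    exact Finsupp.sum_of_support_subset D Finset.subset_union_right _ (by simp)
  have h3 : 0 ≤ ∑ P ∈ s, (X.v P f + D P) * X.degP P :=
    Finset.sum_nonneg fun P _ => mul_nonneg (h P) (by positivity)
  simp only [add_mul, Finset.sum_add_distrib] at h3
  omega

lemma RR_eq_bot {D : Place →₀ ℤ} (hD : X.divDeg D < 0) : X.RR D = ⊥ := by
  rw [eq_bot_iff]
  intro f hf
  rcases (X.mem_RR D f).1 hf with h | h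
  · simpa using h
  · by_contra hne
    have := X.divDeg_nonneg D (f := f) (by simpa using hne) h
    omega

lemma finrank_RR_zero : Module.finrank Fq (X.RR 0) = 1 := by
  have h1 : (1 : F) ∈ X.RR 0 := by
    rw [X.mem_RR]
    right
    intro P
    simp [v_one]
  refine finrank_eq_one (⟨1, h1⟩ : X.RR 0) (by simp) ?_
  rintro ⟨f, hf⟩
  rcases (X.mem_RR 0 f).1 hf with rfl | h
  · exact ⟨0, by ext; simp⟩
  · by_cases hf0 : f = 0
    · exact ⟨0, by ext; simp [hf0]⟩
    · obtain ⟨c, hc⟩ := X.const_of_no_poles f hf0 (by simpa using h)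
      exact ⟨c, by ext; simp [hc, Algebra.smul_def]⟩

/-- The canonical divisor has degree `2g - 2`. -/
lemma divDeg_Kdiv : X.divDeg X.Kdiv = 2 * (X.genus : ℤ) - 2 := by
  have h0 := X.riemann_roch 0
  have hK := X.riemann_roch X.Kdiv
  rw [sub_self, finrank_RR_zero] at hK
  rw [sub_zero, finrank_RR_zero] at h0
  simp only [Finsupp.sum_zero_index] at h0
  change _ = X.divDeg X.Kdiv + 1 - _ + _ at hK
  push_cast at *
  omega

lemma finrank_RR_of_large {D : Place →₀ ℤ} (hD : 2 * (X.genus : ℤ) - 2 < X.divDeg D) :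
    (Module.finrank Fq (X.RR D) : ℤ) = X.divDeg D + 1 - X.genus := by
  have h := X.riemann_roch D
  have hb : X.RR (X.Kdiv - D) = ⊥ := by
    apply X.RR_eq_bot
    rw [sub_eq_add_neg, divDeg_add, divDeg_neg, divDeg_Kdiv]
    omega
  rw [hb, finrank_bot] at h
  change _ = X.divDeg D + 1 - _ + _ at h
  omega

/-! ### Exact pole orders and codes -/

/-- There is a nonzero function with pole order exactly `a` at `P` which elsewhere satisfies the
conditions defining the Riemann-Roch space of `G`. -/
def HasPole (P : Place) (G : Place → ℤ) (a : ℤ) : Prop :=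
  ∃ z : F, z ≠ 0 ∧ X.v P z = -a ∧ ∀ R, R ≠ P → 0 ≤ X.v R z + G R

lemma mem_RR_single {P : Place} {G : Place →₀ ℤ} (hG : G P = 0) (a : ℤ) (z : F) :
    z ∈ X.RR (Finsupp.single P a + G) ↔
      z = 0 ∨ (-a ≤ X.v P z ∧ ∀ R, R ≠ P → 0 ≤ X.v R z + G R) := by
  rw [X.mem_RR]
  refine or_congr_right ⟨fun h => ⟨?_, fun R hR => ?_⟩, fun h R => ?_⟩
  · have := h P
    simp [hG] at this
    omega
  · have := h R
    rwa [Finsupp.add_apply, Finsupp.single_eq_of_ne hR, zero_add] at this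
  · by_cases hR : R = P
    · subst hR
      simp [hG]
      omega
    · rw [Finsupp.add_apply, Finsupp.single_eq_of_ne hR, zero_add]
      exact h.2 R hR

lemma RR_mono {P : Place} {G : Place →₀ ℤ} (hG : G P = 0) (a : ℤ) :
    X.RR (Finsupp.single P (a - 1) + G) ≤ X.RR (Finsupp.single P a + G) := by
  intro z hz
  rw [mem_RR_single X hG] at hz ⊢
  rcases hz with h | h
  · exact Or.inl h
  · exact Or.inr ⟨by omega, h.2⟩

/-- The number of pole orders at `P` in `[0, N)` is at most `ℓ((N - 1)P)`. -/
lemma card_le_finrank (P : Place) (N : ℕ) :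
    ((Finset.range N).filter fun a : ℕ => X.HasPole P 0 a).card
      ≤ Module.finrank Fq (X.RR (Finsupp.single P ((N : ℤ) - 1) + 0)) := by
  induction N with
  | zero => simp
  | succ N ih =>
    have := X.rr_findim (Finsupp.single P (N : ℤ) + 0)
    have hle := X.RR_mono (P := P) (G := 0) (by simp) N
    rw [Finset.range_add_one, Finset.filter_insert]
    have hN : ((N + 1 : ℕ) : ℤ) - 1 = N := by simp
    rw [hN]
    split_ifs with h
    · rw [Finset.card_insert_of_notMem (by simp)]
      refine Nat.succ_le_of_lt (ih.trans_lt ?_)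
      refine Submodule.finrank_lt_finrank_of_lt (lt_of_le_of_ne hle fun he => ?_)
      obtain ⟨z, hz0, hzP, hz⟩ := h
      have hz1 : z ∈ X.RR (Finsupp.single P (N : ℤ) + 0) := by
        rw [mem_RR_single X (by simp)]
        exact Or.inr ⟨by omega, by simpa using hz⟩
      rw [← he, mem_RR_single X (by simp)] at hz1
      rcases hz1 with h | h
      · exact hz0 h
      · omega
    · exact ih.trans (Submodule.finrank_mono hle)

lemma ev_neg {P : Place} (hP : X.degP P = 1) {z : F} (hz : z = 0 ∨ 0 ≤ X.v P z) :
    X.ev P (-z) = - X.ev P z := by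
  have h := X.ev_mul P (algebraMap Fq F (-1)) z hP
    (Or.inr (X.v_algebraMap P _ (by simp)).ge) hz
  rw [X.ev_algebraMap] at h
  simpa using h

/-- If `z` and `k` have the same order at the rational place `P`, then the leading coefficient of
`z` can be cancelled by a constant multiple of `k`. -/
lemma exists_cancel {P : Place} (hP : X.degP P = 1) {z k : F} (hz : z ≠ 0) (hk : k ≠ 0)
    (h : X.v P z = X.v P k) :
    ∃ c : Fq, z - algebraMap Fq F c * k = 0 ∨
      X.v P k + 1 ≤ X.v P (z - algebraMap Fq F c * k) := by
  set u := z * k⁻¹ with hu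
  have hu0 : u ≠ 0 := mul_ne_zero hz (inv_ne_zero hk)
  have hvu : X.v P u = 0 := by
    rw [hu, X.v_mul P _ _ hz (inv_ne_zero hk), X.v_inv P hk]
    omega
  set c := X.ev P u
  refine ⟨c, ?_⟩
  have he : z - algebraMap Fq F c * k = (u + algebraMap Fq F (-c)) * k := by
    rw [hu, map_neg]
    field_simp
    ring
  by_cases h0 : u + algebraMap Fq F (-c) = 0
  · left
    rw [he, h0, zero_mul]
  · right
    have hmc : algebraMap Fq F (-c) = 0 ∨ 0 ≤ X.v P (algebraMap Fq F (-c)) := by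
      by_cases hc : -c = 0
      · left
        simp [hc]
      · exact Or.inr (X.v_algebraMap P _ hc).ge
    have hev : X.ev P (u + algebraMap Fq F (-c)) = 0 := by
      rw [X.ev_add P _ _ hP (Or.inr hvu.ge) hmc, X.ev_algebraMap]
      exact add_neg_cancel c
    have hnn : 0 ≤ X.v P (u + algebraMap Fq F (-c)) := by
      by_cases hc : -c = 0
      · simp [hc, hvu]
      · have := X.v_add P u (algebraMap Fq F (-c)) hu0 (by simpa using hc) h0
        rw [hvu, X.v_algebraMap P _ hc] at this
        simpa using this
    have := (X.ev_eq_zero_iff P _ hP h0 hnn).1 hev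
    rw [he, X.v_mul P _ _ h0 hk]
    omega

/-- The code grows from `a - 1` to `a` iff some function has pole order exactly `a` at `P`, but
none of those functions vanishes at every evaluation point. -/
lemma mem_HhatS_iff {n : ℕ} {PP : Fin n → Place} {P : Place} {t : ℕ} {Q : Fin t → Place}
    {β : Fin t → ℤ} (hP : X.degP P = 1) (hPP : ∀ i, X.degP (PP i) = 1)
    (hPPP : ∀ i, PP i ≠ P) (hGP : Gdiv Q β P = 0) (hGPP : ∀ i, Gdiv Q β (PP i) = 0) (a : ℤ) :
    a ∈ X.HhatS PP P Q β ↔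
      X.HasPole P (Gdiv Q β) a ∧
        ¬ X.HasPole P (fun R => Gdiv Q β R - if ∃ i, R = PP i then 1 else 0) a := by
  set G := Gdiv Q β with hG
  -- Elements of the Riemann-Roch spaces are regular at the evaluation points.
  have hreg : ∀ b z, z ∈ X.RR (Finsupp.single P b + G) → ∀ i, z = 0 ∨ 0 ≤ X.v (PP i) z := by
    intro b z hz i
    rcases (mem_RR_single X hGP b z).1 hz with h | h
    · exact Or.inl h
    · have := h.2 (PP i) (hPPP i)
      rw [hGPP] at this
      exact Or.inr (by omega)
  have hmono := X.RR_mono hGP a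
  have hsub : X.code PP (Finsupp.single P (a - 1) + G) ⊆ X.code PP (Finsupp.single P a + G) := by
    rintro w ⟨z, hz, hw⟩
    exact ⟨z, hmono hz, hw⟩
  change X.code PP _ ≠ X.code PP _ ↔ _
  have key : X.code PP (Finsupp.single P a + G) = X.code PP (Finsupp.single P (a - 1) + G) ↔
      (X.HasPole P G a →
        X.HasPole P (fun R => G R - if ∃ i, R = PP i then 1 else 0) a) := by
    constructor
    · rintro heq ⟨z, hz0, hzP, hz⟩
      have hzA : z ∈ X.RR (Finsupp.single P a + G) :=
        (mem_RR_single X hGP a z).2 (Or.inr ⟨by omega, hz⟩)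
      have : (fun i => X.ev (PP i) z) ∈ X.code PP (Finsupp.single P (a - 1) + G) := by
        rw [← heq]
        exact ⟨z, hzA, fun _ => rfl⟩
      obtain ⟨w, hwB, hw⟩ := this
      have hkA : z + -w ∈ X.RR (Finsupp.single P a + G) :=
        add_mem hzA (neg_mem (hmono hwB))
      have hkB : z + -w ∉ X.RR (Finsupp.single P (a - 1) + G) := by
        intro h
        have h2 := add_mem h hwB
        rw [neg_add_cancel_right, mem_RR_single X hGP] at h2
        rcases h2 with h2 | h2
        · exact hz0 h2
        · omega
      rw [mem_RR_single X hGP] at hkB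
      rw [not_or] at hkB
      have hk := ((mem_RR_single X hGP a _).1 hkA).resolve_left hkB.1
      refine ⟨z + -w, hkB.1, ?_, fun R hR => ?_⟩
      · by_contra hne
        exact hkB.2 ⟨by omega, hk.2⟩
      · have hR0 := hk.2 R hR
        beta_reduce
        split_ifs with hex
        · obtain ⟨i, rfl⟩ := hex
          have hv := (hreg a _ hkA i).resolve_left hkB.1
          have hev : X.ev (PP i) (z + -w) = 0 := by
            have hwr := hreg _ _ hwB i
            have hnw : -w = 0 ∨ 0 ≤ X.v (PP i) (-w) := hreg _ _ (neg_mem hwB) i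
            rw [X.ev_add _ _ _ (hPP i) (hreg _ _ hzA i) hnw, X.ev_neg (hPP i) hwr]
            have := hw i
            simp only at this
            rw [this]
            ring
          have := (X.ev_eq_zero_iff _ _ (hPP i) hkB.1 hv).1 hev
          rw [hGPP]
          omega
        · omega
    · intro himp
      refine Set.Subset.antisymm ?_ hsub
      rintro w ⟨z, hz, hw⟩
      by_cases hzB : z ∈ X.RR (Finsupp.single P (a - 1) + G)
      · exact ⟨z, hzB, hw⟩
      rw [mem_RR_single X hGP, not_or] at hzB
      have hz' := ((mem_RR_single X hGP a _).1 hz).resolve_left hzB.1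
      have hvz : X.v P z = -a := by
        by_contra hne
        exact hzB.2 ⟨by omega, hz'.2⟩
      obtain ⟨k, hk0, hkP, hk⟩ := himp ⟨z, hzB.1, hvz, hz'.2⟩
      have hkA : k ∈ X.RR (Finsupp.single P a + G) := by
        refine (mem_RR_single X hGP a k).2 (Or.inr ⟨hkP.ge, fun R hR => ?_⟩)
        have := hk R hR
        beta_reduce at this
        split_ifs at this <;> omega
      obtain ⟨c, hc⟩ := X.exists_cancel hP hzB.1 hk0 (hvz.trans hkP.symm)
      have hck : algebraMap Fq F c * k ∈ X.RR (Finsupp.single P a + G) := by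
        rw [← Algebra.smul_def]
        exact Submodule.smul_mem _ c hkA
      have hdA := sub_mem hz hck
      refine ⟨z - algebraMap Fq F c * k, ?_, fun i => ?_⟩
      · rw [mem_RR_single X hGP]
        rcases hc with hc | hc
        · exact Or.inl hc
        · rcases (mem_RR_single X hGP a _).1 hdA with h | h
          · exact Or.inl h
          · exact Or.inr ⟨by omega, h.2⟩
      · have hevk : X.ev (PP i) k = 0 := by
          have h1 := hk (PP i) (hPPP i)
          beta_reduce at h1
          rw [if_pos ⟨i, rfl⟩, hGPP] at h1
          exact (X.ev_eq_zero_iff _ _ (hPP i) hk0 (by omega)).2 (by omega)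
        have hc0 : algebraMap Fq F c = 0 ∨ 0 ≤ X.v (PP i) (algebraMap Fq F c) := by
          by_cases hc : c = 0
          · left
            simp [hc]
          · exact Or.inr (X.v_algebraMap _ _ hc).ge
        rw [hw i, sub_eq_add_neg, X.ev_add _ _ _ (hPP i) (hreg _ _ hz i)
          (hreg _ _ (neg_mem hck) i), X.ev_neg (hPP i) (hreg _ _ hck i),
          X.ev_mul _ _ _ (hPP i) hc0 (hreg _ _ hkA i), hevk]
        simp
  rw [Ne, key, Classical.not_imp]

/-- Multiplication by a function with prescribed divisor away from `P` shifts pole orders. -/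
lemma HasPole.mul {P : Place} {G G' : Place → ℤ} {a b : ℤ} (h : X.HasPole P G' a) {w : F}
    (hw0 : w ≠ 0) (hwP : X.v P w = -b) (hw : ∀ R, R ≠ P → X.v R w + G R = G' R) :
    X.HasPole P G (a + b) := by
  obtain ⟨z, hz0, hzP, hz⟩ := h
  refine ⟨z * w, mul_ne_zero hz0 hw0, ?_, fun R hR => ?_⟩
  · rw [X.v_mul P _ _ hz0 hw0]
    omega
  · rw [X.v_mul R _ _ hz0 hw0]
    have := hz R hR
    have := hw R hR
    omega

end Data

/-! ### Arithmetic of the floor condition, and coefficients of divisors -/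

lemma reflect_ediv {m : ℤ} (hm : 0 < m) (b j : ℤ) :
    (-b + (m - 1 - j)) / m = -((b + j) / m) := by
  have h1 := Int.emod_add_mul_ediv (b + j) m
  have h2 := Int.emod_nonneg (b + j) hm.ne'
  have h3 := Int.emod_lt_of_pos (b + j) hm
  rw [show -b + (m - 1 - j) = (m - 1 - (b + j) % m) + m * (-((b + j) / m)) by linarith,
    Int.add_mul_ediv_left _ _ hm.ne', Int.ediv_eq_zero_of_lt (by omega) (by omega), zero_add]

/-- If the floor condition fails for `(a, β, j)`, it holds for the reflected triple
`(2g - 1 - a, -β, m - 1 - j)`, where `2g = (m - 1)(r - 1)`. -/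
lemma cond_reflect {m r a j : ℤ} (hm : 0 < m) {t : ℕ} (β : Fin t → ℤ) (hd : m ∣ r * j - a)
    (h : ¬ r * j - a ≤ m * ∑ i, (β i + j) / m) :
    r * (m - 1 - j) - ((m - 1) * (r - 1) - 1 - a) ≤ m * ∑ i, ((-β) i + (m - 1 - j)) / m := by
  have h1 : ∑ i, ((-β) i + (m - 1 - j)) / m = - ∑ i, (β i + j) / m := by
    rw [← Finset.sum_neg_distrib]
    exact Finset.sum_congr rfl fun i _ => reflect_ediv hm _ _
  rw [h1]
  set s := ∑ i, (β i + j) / m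
  obtain ⟨c, hc⟩ := hd
  rw [hc, not_le] at h
  have hlt : s < c := lt_of_mul_lt_mul_left h hm.le
  have h2 : m * (s + 1) ≤ m * c := mul_le_mul_of_nonneg_left (by omega) hm.le
  linarith

lemma dvd_of_inverse {m r u : ℤ} (hu : u * r ≡ 1 [ZMOD m]) (a : ℤ) :
    m ∣ r * ((u * a) % m) - a := by
  have h1 : (u * a) % m ≡ u * a [ZMOD m] := Int.mod_modEq _ _
  have h2 : r * ((u * a) % m) ≡ a [ZMOD m] := by
    calc r * ((u * a) % m) ≡ r * (u * a) [ZMOD m] := h1.mul_left r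
      _ = u * r * a := by ring
      _ ≡ 1 * a [ZMOD m] := hu.mul_right a
      _ = a := one_mul a
  exact h2.symm.dvd

lemma Gdiv_apply {t : ℕ} (Q : Fin t → Place) (β : Fin t → ℤ) (R : Place) :
    Gdiv Q β R = ∑ i, if R = Q i then β i else 0 := by
  simp [Gdiv, Finsupp.finsetSum_apply, Finsupp.single_apply, eq_comm]

lemma Gdiv_apply_of_ne {t : ℕ} {Q : Fin t → Place} (β : Fin t → ℤ) {R : Place}
    (h : ∀ i, R ≠ Q i) : Gdiv Q β R = 0 := by
  simp [Gdiv_apply, h]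

lemma Gdiv_apply_self {t : ℕ} {Q : Fin t → Place} (hQ : Function.Injective Q) (β : Fin t → ℤ)
    (i : Fin t) : Gdiv Q β (Q i) = β i := by
  simp [Gdiv_apply, hQ.eq_iff]

namespace KummerData

variable (X : KummerData Fq F Place)

/-! ### Pole orders at infinity in the Kummer extension -/

lemma m_pos : 0 < (X.m : ℤ) := by
  have := X.r_lt_m
  omega

lemma two_genus : 2 * (X.genus : ℤ) = ((X.m : ℤ) - 1) * ((X.r : ℤ) - 1) := by
  have h1 := X.two_le_r
  have h2 := X.r_lt_m
  have := X.genus_eq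
  zify [show 1 ≤ X.m by omega, show 1 ≤ X.r by omega] at this
  exact this

lemma y_ne_zero : X.y ≠ 0 := by
  intro h
  have h1 := X.v_y X.Pinf
  have := X.two_le_r
  rw [h, X.v_zero, if_pos rfl] at h1
  omega

lemma x_sub_alpha_ne_zero (i : Fin X.r) : X.x - algebraMap Fq F (X.α i) ≠ 0 := by
  intro h
  have h1 := X.v_x_sub_alpha i X.Pinf
  have := X.m_pos
  rw [h, X.v_zero, if_neg (X.Q_ne_Pinf i).symm, if_pos rfl] at h1
  omega

lemma x_sub_gamma_ne_zero (j : Fin (X.r1 - X.r)) : X.x - algebraMap Fq F (X.γ j) ≠ 0 := by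
  intro h
  have h1 := X.v_x_sub_gamma j X.Pinf
  have := X.m_pos
  rw [h, X.v_zero, if_neg (by rintro ⟨k, hk⟩; exact X.S_ne_Pinf j k hk.symm), if_pos rfl] at h1
  omega

lemma Qt_injective (t : ℕ) (ht : t ≤ X.r) : Function.Injective (X.Qt t ht) := by
  intro i j h
  have := X.Q_inj h
  simp only [Fin.mk.injEq] at this
  exact Fin.ext this

lemma Gdiv_Pinf {t : ℕ} (ht : t ≤ X.r) (β : Fin t → ℤ) : Gdiv (X.Qt t ht) β X.Pinf = 0 :=
  Gdiv_apply_of_ne β fun _ => (X.Q_ne_Pinf _).symm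

/-- The floor condition produces the function
`y ^ j * (x - α₁) ^ e * ∏ (x - αᵢ) ^ (-⌊(βᵢ + j) / m⌋)` with a pole of order `a` at infinity. -/
lemma hasPole_of_cond {t : ℕ} (ht : t ≤ X.r) (β : Fin t → ℤ) {a j : ℤ} (hj : 0 ≤ j)
    (hd : (X.m : ℤ) ∣ X.r * j - a)
    (h : X.r * j - a ≤ X.m * ∑ i, (β i + j) / (X.m : ℤ)) :
    X.HasPole X.Pinf (Gdiv (X.Qt t ht) β) a := by
  have hm := X.m_pos
  have hr : 0 < X.r := by have := X.two_le_r; omega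
  obtain ⟨c, hc⟩ := hd
  set s : Fin t → ℤ := fun i => (β i + j) / (X.m : ℤ) with hs
  have hcs : c ≤ ∑ i, s i := by
    rw [hc] at h
    exact le_of_mul_le_mul_left h hm
  set e : ℤ := ∑ i, s i - c with he
  set i0 : Fin X.r := ⟨0, hr⟩
  let w : Fin t → F := fun i => (X.x - algebraMap Fq F (X.α ⟨i.1, by have := i.2; omega⟩)) ^ (-s i)
  have hw0 : ∀ i, w i ≠ 0 := fun i => zpow_ne_zero _ (X.x_sub_alpha_ne_zero _)
  have hp0 : ∏ i, w i ≠ 0 := Finset.prod_ne_zero_iff.2 fun i _ => hw0 i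
  have hy := zpow_ne_zero j X.y_ne_zero
  have hx := zpow_ne_zero e (X.x_sub_alpha_ne_zero i0)
  have hv : ∀ R, X.v R (X.y ^ j * (X.x - algebraMap Fq F (X.α i0)) ^ e * ∏ i, w i) =
      j * X.v R X.y + e * X.v R (X.x - algebraMap Fq F (X.α i0)) +
        ∑ i, -s i * X.v R (X.x - algebraMap Fq F (X.α ⟨i.1, by have := i.2; omega⟩)) := by
    intro R
    rw [X.v_mul R _ _ (mul_ne_zero hy hx) hp0, X.v_mul R _ _ hy hx, X.toData.v_prod R _ _ hw0,
      X.toData.v_zpow R X.y_ne_zero, X.toData.v_zpow R (X.x_sub_alpha_ne_zero i0)]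
    congr 1
    exact Finset.sum_congr rfl fun i _ => X.toData.v_zpow R (X.x_sub_alpha_ne_zero _) _
  refine ⟨_, mul_ne_zero (mul_ne_zero hy hx) hp0, ?_, fun R hR => ?_⟩
  · rw [hv]
    simp only [X.v_y, X.v_x_sub_alpha, (X.Q_ne_Pinf _).symm, if_true, if_false]
    rw [← Finset.sum_mul, Finset.sum_neg_distrib, he]
    linear_combination -hc
  · have hsum : ∑ i, -s i * X.v R (X.x - algebraMap Fq F (X.α ⟨i.1, by have := i.2; omega⟩)) +
        Gdiv (X.Qt t ht) β R = ∑ i, if R = X.Qt t ht i then β i - X.m * s i else 0 := by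
      rw [Gdiv_apply, ← Finset.sum_add_distrib]
      refine Finset.sum_congr rfl fun i _ => ?_
      rw [X.v_x_sub_alpha, if_neg hR]
      change -s i * (if R = X.Qt t ht i then (X.m : ℤ) else 0) + _ = _
      split_ifs <;> ring
    have hE : 0 ≤ e * X.v R (X.x - algebraMap Fq F (X.α i0)) := by
      refine mul_nonneg (by omega) ?_
      rw [X.v_x_sub_alpha, if_neg hR]
      split_ifs <;> omega
    rw [hv, add_assoc, hsum]
    by_cases hex : ∃ i, R = X.Qt t ht i
    · obtain ⟨i, rfl⟩ := hex
      have hyv : X.v (X.Qt t ht i) X.y = 1 := by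
        rw [X.v_y, if_neg hR, if_pos ⟨_, rfl⟩]
      rw [hyv]
      simp only [(X.Qt_injective t ht).eq_iff, Finset.sum_ite_eq, Finset.mem_univ, if_true]
      have : (X.m : ℤ) * s i ≤ β i + j := Int.mul_ediv_self_le hm.ne'
      linarith
    · rw [not_exists] at hex
      have hyv : 0 ≤ j * X.v R X.y := by
        refine mul_nonneg hj ?_
        rw [X.v_y, if_neg hR]
        split_ifs <;> omega
      simp only [hex, if_false, Finset.sum_const_zero]
      linarith

/-- For each `a`, the floor condition with `β = 0` holds for `a` or for its reflection
`2g - 1 - a`, so one of the two is a pole order at infinity. -/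
lemma hasPole_or_reflect {u : ℤ} (hu : u * X.r ≡ 1 [ZMOD (X.m : ℤ)]) (a : ℤ) :
    X.HasPole X.Pinf 0 a ∨ X.HasPole X.Pinf 0 (2 * X.genus - 1 - a) := by
  have hm := X.m_pos
  have hd := dvd_of_inverse hu a
  set j := (u * a) % (X.m : ℤ)
  have hj0 : 0 ≤ j := Int.emod_nonneg _ hm.ne'
  have hj1 : j < X.m := Int.emod_lt_of_pos _ hm
  have hG : ∀ β : Fin 0 → ℤ, (⇑(Gdiv (X.Qt 0 (Nat.zero_le _)) β) : Place → ℤ) = 0 := by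
    intro β
    ext R
    simp [Gdiv]
  by_cases h : X.r * j - a ≤ X.m * ∑ i : Fin 0, ((0 : Fin 0 → ℤ) i + j) / (X.m : ℤ)
  · left
    rw [← hG 0]
    exact X.hasPole_of_cond _ _ hj0 hd h
  · right
    have h' := cond_reflect hm _ hd h
    rw [← hG (-0), X.two_genus]
    refine X.hasPole_of_cond _ _ (by omega) ?_ h'
    obtain ⟨c, hc⟩ := hd
    exact ⟨1 - c, by linear_combination -hc⟩

/-- The number `2g - 1` is a gap at infinity. Otherwise pairing `a` with `2g - 1 - a` would give at
least `g + 1` pole orders in `[0, 2g)`, more than `ℓ((2g - 1)P_∞) = g`. -/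
lemma not_hasPole_two_genus_sub_one {u : ℤ} (hu : u * X.r ≡ 1 [ZMOD (X.m : ℤ)]) :
    ¬ X.HasPole X.Pinf 0 (2 * X.genus - 1) := by
  intro hgap
  have hg : 0 < X.genus := by
    have h1 := X.two_genus
    have := X.two_le_r
    have := X.r_lt_m
    have : 0 < ((X.m : ℤ) - 1) * ((X.r : ℤ) - 1) := mul_pos (by omega) (by omega)
    omega
  have hcard := X.toData.card_le_finrank X.Pinf (2 * X.genus)
  have hdeg : X.divDeg (Finsupp.single X.Pinf (((2 * X.genus : ℕ) : ℤ) - 1) + 0)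
      = 2 * X.genus - 1 := by
    rw [add_zero, X.toData.divDeg_single, X.Pinf_rational]
    push_cast
    ring
  have hrank := X.toData.finrank_RR_of_large
    (D := Finsupp.single X.Pinf (((2 * X.genus : ℕ) : ℤ) - 1) + 0) (by rw [hdeg]; omega)
  rw [hdeg] at hrank
  set H := (Finset.range (2 * X.genus)).filter fun a : ℕ => X.HasPole X.Pinf 0 a with hH
  have h0 : 0 ∈ H := by
    rw [hH, Finset.mem_filter, Finset.mem_range]
    exact ⟨by omega, 1, one_ne_zero, by simp [X.toData.v_one],
      fun R _ => by simp [X.toData.v_one]⟩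
  have hcover : Finset.range (2 * X.genus) ⊆
      H ∪ (H.erase 0).image fun a => 2 * X.genus - 1 - a := by
    intro a ha
    rw [Finset.mem_range] at ha
    rw [Finset.mem_union]
    by_cases hP : X.HasPole X.Pinf 0 a
    · exact Or.inl (Finset.mem_filter.2 ⟨Finset.mem_range.2 ha, hP⟩)
    · right
      have hP' := (X.hasPole_or_reflect hu a).resolve_left hP
      have hne : a ≠ 2 * X.genus - 1 := by
        rintro rfl
        apply hP
        convert hgap using 1
        omega
      rw [Finset.mem_image]
      refine ⟨2 * X.genus - 1 - a, ?_, by omega⟩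
      rw [Finset.mem_erase, hH, Finset.mem_filter, Finset.mem_range]
      refine ⟨by omega, by omega, ?_⟩
      convert hP' using 1
      omega
  have h1 := Finset.card_le_card hcover
  have h2 := Finset.card_union_le H ((H.erase 0).image fun a => 2 * X.genus - 1 - a)
  have h3 : ((H.erase 0).image fun a => 2 * X.genus - 1 - a).card ≤ (H.erase 0).card :=
    Finset.card_image_le
  rw [Finset.card_erase_of_mem h0] at h3
  have h4 : 0 < H.card := Finset.card_pos.2 ⟨0, h0⟩
  rw [Finset.card_range] at h1
  omega

/-- Either the floor condition holds, or `L((2g - 1 - a)P_∞ - G_β)` contains a function with pole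
order exactly `2g - 1 - a` at infinity. -/
lemma hasPole_reflect_of_not_cond {t : ℕ} (ht : t ≤ X.r) (β : Fin t → ℤ) {a j : ℤ}
    (hj1 : j < X.m) (hd : (X.m : ℤ) ∣ X.r * j - a)
    (h : ¬ X.r * j - a ≤ X.m * ∑ i, (β i + j) / (X.m : ℤ)) :
    X.HasPole X.Pinf (Gdiv (X.Qt t ht) (-β)) (2 * X.genus - 1 - a) := by
  have h' := cond_reflect X.m_pos _ hd h
  rw [X.two_genus]
  refine X.hasPole_of_cond _ _ (by omega) ?_ h'
  obtain ⟨c, hc⟩ := hd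
  exact ⟨1 - c, by linear_combination -hc⟩

/-- Characterization of the exact pole orders at infinity. If the condition fails, multiplying by
the function for the reflected data would produce a pole of order `2g - 1`. -/
lemma hasPole_iff {t : ℕ} (ht : t ≤ X.r) (β : Fin t → ℤ) {a j u : ℤ}
    (hu : u * X.r ≡ 1 [ZMOD (X.m : ℤ)]) (hj : j = (u * a) % (X.m : ℤ)) :
    X.HasPole X.Pinf (Gdiv (X.Qt t ht) β) a ↔
      X.r * j - a ≤ X.m * ∑ i, (β i + j) / (X.m : ℤ) := by
  have hm := X.m_pos
  have hd := dvd_of_inverse hu a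
  rw [← hj] at hd
  have hj0 : 0 ≤ j := hj ▸ Int.emod_nonneg _ hm.ne'
  have hj1 : j < X.m := hj ▸ Int.emod_lt_of_pos _ hm
  refine ⟨?_, X.hasPole_of_cond ht β hj0 hd⟩
  rintro ⟨f, hf0, hfP, hf⟩
  by_contra hn
  obtain ⟨k, hk0, hkP, hk⟩ := X.hasPole_reflect_of_not_cond ht β hj1 hd hn
  refine X.not_hasPole_two_genus_sub_one hu ⟨f * k, mul_ne_zero hf0 hk0, ?_, fun R hR => ?_⟩
  · rw [X.v_mul _ _ _ hf0 hk0]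
    omega
  · rw [X.v_mul _ _ _ hf0 hk0]
    have h1 := hf R hR
    have h2 := hk R hR
    have h3 : Gdiv (X.Qt t ht) (-β) R = - Gdiv (X.Qt t ht) β R := by
      rw [Gdiv_apply, Gdiv_apply, ← Finset.sum_neg_distrib]
      exact Finset.sum_congr rfl fun i _ => by split_ifs <;> simp
    simp only [Pi.zero_apply]
    omega

/-! ### The evaluation points -/

lemma exists_Dtuple_iff {t : ℕ} (ht : t ≤ X.r) (R : Place) :
    (∃ i, R = X.Dtuple t ht i) ↔
      (∃ i : Fin X.r, t ≤ i.1 ∧ R = X.Q i) ∨ ∃ j k, R = X.S j k := by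
  constructor
  · rintro ⟨i, rfl⟩
    induction i using Fin.addCases with
    | left i => exact Or.inl ⟨⟨t + i.1, by have := i.2; omega⟩, Nat.le_add_right _ _,
        by rw [Dtuple, Fin.append_left]⟩
    | right i => exact Or.inr ⟨_, _, by rw [Dtuple, Fin.append_right]⟩
  · rintro (⟨i, hi, rfl⟩ | ⟨j, k, rfl⟩)
    · refine ⟨Fin.castAdd _ ⟨i.1 - t, by have := i.2; omega⟩, ?_⟩
      rw [Dtuple, Fin.append_left]
      congr 1
      ext
      simp
      omega
    · refine ⟨Fin.natAdd _ (finProdFinEquiv (j, k)), ?_⟩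
      rw [Dtuple, Fin.append_right]
      simp

lemma Dtuple_injective {t : ℕ} (ht : t ≤ X.r) : Function.Injective (X.Dtuple t ht) := by
  rw [Dtuple, Fin.append_injective_iff]
  refine ⟨fun i j h => ?_, fun i j h => ?_, fun i j h => X.S_ne_Q _ _ _ h.symm⟩
  · have := X.Q_inj h
    simp only [Fin.mk.injEq] at this
    ext
    omega
  · exact finProdFinEquiv.symm.injective (X.S_inj h)

lemma Dtuple_rational {t : ℕ} (ht : t ≤ X.r) (i) : X.degP (X.Dtuple t ht i) = 1 := by
  rcases (X.exists_Dtuple_iff ht _).1 ⟨i, rfl⟩ with ⟨k, -, h⟩ | ⟨j, k, h⟩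
  · rw [h, X.Q_rational]
  · rw [h, X.S_rational]

lemma Dtuple_ne_Pinf {t : ℕ} (ht : t ≤ X.r) (i) : X.Dtuple t ht i ≠ X.Pinf := by
  rcases (X.exists_Dtuple_iff ht _).1 ⟨i, rfl⟩ with ⟨k, -, h⟩ | ⟨j, k, h⟩
  · rw [h]
    exact X.Q_ne_Pinf _
  · rw [h]
    exact X.S_ne_Pinf _ _

lemma Dtuple_ne_Qt {t : ℕ} (ht : t ≤ X.r) (i) (l : Fin t) :
    X.Dtuple t ht i ≠ X.Qt t ht l := by
  intro he
  rcases (X.exists_Dtuple_iff ht _).1 ⟨i, rfl⟩ with ⟨k, hk, h⟩ | ⟨j, k, h⟩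
  · have := X.Q_inj (h.symm.trans he)
    have h2 := l.2
    rw [this] at hk
    simp at hk
    omega
  · exact X.S_ne_Q _ _ _ (h.symm.trans he)

lemma Ddiv_apply {n : ℕ} {PP : Fin n → Place} (hPP : Function.Injective PP) (R : Place) :
    Ddiv PP R = if ∃ i, R = PP i then 1 else 0 := by
  have h : Ddiv PP = Gdiv PP 1 := rfl
  rw [h]
  split_ifs with hex
  · obtain ⟨i, rfl⟩ := hex
    exact Gdiv_apply_self hPP 1 i
  · exact Gdiv_apply_of_ne 1 (not_exists.1 hex)

/-- A function vanishing on all of `D` with pole order `a` at infinity forces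
`n ≤ a + ∑ βᵢ`. -/
lemma not_hasPole_of_lt {t : ℕ} (ht : t ≤ X.r) (β : Fin t → ℤ) {a : ℤ}
    (h : a + ∑ i, β i < ((X.r - t) + (X.r1 - X.r) * X.m : ℕ)) :
    ¬ X.HasPole X.Pinf (fun R => Gdiv (X.Qt t ht) β R -
        if ∃ i, R = X.Dtuple t ht i then 1 else 0) a := by
  rintro ⟨z, hz0, hzP, hz⟩
  have hdeg := X.toData.divDeg_nonneg
    (Finsupp.single X.Pinf a + Gdiv (X.Qt t ht) β + -Ddiv (X.Dtuple t ht)) hz0 (fun R => by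
      simp only [Finsupp.add_apply, Finsupp.neg_apply, Ddiv_apply (X.Dtuple_injective ht)]
      by_cases hR : R = X.Pinf
      · subst hR
        rw [X.Gdiv_Pinf, if_neg (by rintro ⟨i, hi⟩; exact X.Dtuple_ne_Pinf ht i hi.symm),
          Finsupp.single_eq_same]
        omega
      · rw [Finsupp.single_eq_of_ne hR]
        have := hz R hR
        beta_reduce at this
        omega)
  rw [X.toData.divDeg_add, X.toData.divDeg_add, X.toData.divDeg_neg, X.toData.divDeg_single,
    X.toData.divDeg_Gdiv (X.Qt t ht) (fun i => X.Q_rational _),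
    X.toData.divDeg_Ddiv _ (X.Dtuple_rational ht), X.Pinf_rational] at hdeg
  push_cast at h hdeg
  omega

/-- Every `a` with `a + ∑ βᵢ ≥ 2g` is a pole order: the reflected divisor has negative degree. -/
lemma hasPole_of_large {t : ℕ} (ht : t ≤ X.r) (β : Fin t → ℤ) {a u : ℤ}
    (hu : u * X.r ≡ 1 [ZMOD (X.m : ℤ)]) (h : 2 * (X.genus : ℤ) ≤ a + ∑ i, β i) :
    X.HasPole X.Pinf (Gdiv (X.Qt t ht) β) a := by
  rw [X.hasPole_iff ht β hu rfl]
  by_contra hn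
  obtain ⟨z, hz0, hzP, hz⟩ := X.hasPole_reflect_of_not_cond ht β
    (Int.emod_lt_of_pos _ X.m_pos) (dvd_of_inverse hu a) hn
  have hdeg := X.toData.divDeg_nonneg
    (Finsupp.single X.Pinf (2 * X.genus - 1 - a) + Gdiv (X.Qt t ht) (-β)) hz0 (fun R => by
      rw [Finsupp.add_apply]
      by_cases hR : R = X.Pinf
      · subst hR
        rw [X.Gdiv_Pinf, Finsupp.single_eq_same]
        omega
      · rw [Finsupp.single_eq_of_ne hR, zero_add]
        exact hz R hR)
  rw [X.toData.divDeg_add, X.toData.divDeg_single,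
    X.toData.divDeg_Gdiv (X.Qt t ht) (fun i => X.Q_rational _), X.Pinf_rational] at hdeg
  simp only [Pi.neg_apply, Finset.sum_neg_distrib] at hdeg
  push_cast at hdeg
  omega

/-- Since `y * ∏ (x - γⱼ)` has divisor `D + Q₁ + ⋯ + Q_t - (n + t)P_∞`, subtracting `D` amounts to
shifting `a` by `n + t` and each `βᵢ` by one. -/
lemma hasPole_sub_D_iff {t : ℕ} (ht : t ≤ X.r) (β : Fin t → ℤ) (a : ℤ) :
    X.HasPole X.Pinf (fun R => Gdiv (X.Qt t ht) β R -
        if ∃ i, R = X.Dtuple t ht i then 1 else 0) a ↔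
      X.HasPole X.Pinf (Gdiv (X.Qt t ht) (β + 1))
        (a - ((X.r - t) + (X.r1 - X.r) * X.m : ℕ) - t) := by
  set w := X.y * ∏ j, (X.x - algebraMap Fq F (X.γ j)) with hw
  have hp0 : ∏ j, (X.x - algebraMap Fq F (X.γ j)) ≠ 0 :=
    Finset.prod_ne_zero_iff.2 fun j _ => X.x_sub_gamma_ne_zero j
  have hw0 : w ≠ 0 := mul_ne_zero X.y_ne_zero hp0
  have hv : ∀ R, X.v R w = X.v R X.y + ∑ j, X.v R (X.x - algebraMap Fq F (X.γ j)) := by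
    intro R
    rw [hw, X.v_mul _ _ _ X.y_ne_zero hp0, X.toData.v_prod _ _ _ X.x_sub_gamma_ne_zero]
  have hr1 := X.r_le_r1
  have hwP : X.v X.Pinf w = -(((X.r - t) + (X.r1 - X.r) * X.m : ℕ) + t) := by
    have hS : ∀ j, ¬ ∃ k, X.Pinf = X.S j k := by
      rintro j ⟨k, hk⟩
      exact X.S_ne_Pinf j k hk.symm
    rw [hv, X.v_y, if_pos rfl]
    simp only [X.v_x_sub_gamma, hS, if_true, if_false, Finset.sum_const, Finset.card_univ,
      Fintype.card_fin, nsmul_eq_mul]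
    push_cast [Nat.cast_sub ht, Nat.cast_sub hr1]
    ring
  have hwR : ∀ R, R ≠ X.Pinf → X.v R w + (Gdiv (X.Qt t ht) β R -
      if ∃ i, R = X.Dtuple t ht i then 1 else 0) = Gdiv (X.Qt t ht) (β + 1) R := by
    intro R hR
    rw [hv, X.v_y, if_neg hR]
    simp only [X.v_x_sub_gamma, if_neg hR]
    by_cases hQ : ∃ i, R = X.Q i
    · obtain ⟨i, rfl⟩ := hQ
      have hS : ∀ j, ¬ ∃ k, X.Q i = X.S j k := by
        rintro j ⟨k, hk⟩
        exact X.S_ne_Q j k i hk.symm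
      simp only [hS, if_false, Finset.sum_const_zero]
      rw [if_pos ⟨i, rfl⟩]
      by_cases hi : i.1 < t
      · have hQt : X.Q i = X.Qt t ht ⟨i.1, hi⟩ := rfl
        rw [hQt, Gdiv_apply_self (X.Qt_injective t ht), Gdiv_apply_self (X.Qt_injective t ht),
          if_neg (by rintro ⟨l, hl⟩; exact X.Dtuple_ne_Qt ht l _ hl.symm)]
        simp
        ring
      · have hQt : ∀ l, X.Q i ≠ X.Qt t ht l := by
          intro l hl
          have h1 := X.Q_inj hl
          have h2 := l.2
          rw [h1] at hi
          exact hi h2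
        rw [Gdiv_apply_of_ne _ hQt, Gdiv_apply_of_ne _ hQt,
          if_pos ((X.exists_Dtuple_iff ht _).2 (Or.inl ⟨i, by omega, rfl⟩))]
        simp
    · rw [if_neg hQ]
      have hQt : ∀ l, R ≠ X.Qt t ht l := fun l hl => hQ ⟨_, hl⟩
      rw [Gdiv_apply_of_ne _ hQt, Gdiv_apply_of_ne _ hQt]
      by_cases hS : ∃ j k, R = X.S j k
      · rw [if_pos ((X.exists_Dtuple_iff ht _).2 (Or.inr hS))]
        obtain ⟨j, k, rfl⟩ := hS
        have : ∀ j', (∃ k', X.S j k = X.S j' k') ↔ j' = j := by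
          intro j'
          constructor
          · rintro ⟨k', h⟩
            have := @X.S_inj (j, k) (j', k') h
            simp only [Prod.mk.injEq] at this
            exact this.1.symm
          · rintro rfl
            exact ⟨k, rfl⟩
        simp only [this]
        simp
      · have hS' : ∀ j, ¬ ∃ k, R = X.S j k := fun j h => hS ⟨j, h⟩
        rw [if_neg]
        · simp only [hS', if_false]
          simp
        · rw [X.exists_Dtuple_iff ht]
          rintro (⟨i, -, h⟩ | h)
          · exact hQ ⟨i, h⟩
          · exact hS h
  constructor
  · intro h
    have := h.mul X.toData (G := Gdiv (X.Qt t ht) (β + 1)) (inv_ne_zero hw0)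
      (b := -(((X.r - t) + (X.r1 - X.r) * X.m : ℕ) + t))
      (by rw [X.toData.v_inv _ hw0, hwP]) (fun R hR => by
        rw [X.toData.v_inv _ hw0]
        have := hwR R hR
        omega)
    convert this using 1
    ring
  · intro h
    have := h.mul X.toData (G := fun R => Gdiv (X.Qt t ht) β R -
        if ∃ i, R = X.Dtuple t ht i then 1 else 0) hw0 hwP hwR
    convert this using 1
    ring

end KummerData

end AGCodes

theorem stmt14 {Fq F Place : Type*} [Field Fq] [Fintype Fq] [Field F] [Algebra Fq F]
    (X : KummerData Fq F Place) {t : ℕ} (ht1 : 1 ≤ t) (ht : t ≤ X.r)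
    (β : Fin t → ℤ) (hβ : 0 ≤ ∑ i, β i)
    (hn : 2 * X.genus ≤ (X.r - t) + (X.r1 - X.r) * X.m)
    (rtilde : ℤ) (hrt : rtilde * X.r ≡ 1 [ZMOD (X.m : ℤ)])
    (a : ℤ) :
    ((0 ≤ a + ∑ i, β i ∧ a + ∑ i, β i < ((X.r - t) + (X.r1 - X.r) * X.m : ℕ)) →
      (a ∈ X.toData.HhatS (X.Dtuple t ht) X.Pinf (X.Qt t ht) β ↔
        ∀ j : ℤ, j = (rtilde * a) % (X.m : ℤ) →
          ((X.r : ℚ) * j - a) / (X.m : ℚ)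
            ≤ ∑ i : Fin t, (⌊((β i + j : ℤ) : ℚ) / (X.m : ℚ)⌋ : ℚ))) ∧
    ((((X.r - t) + (X.r1 - X.r) * X.m : ℕ) : ℤ) ≤ a + ∑ i, β i ∧
        a + ∑ i, β i ≤ (((X.r - t) + (X.r1 - X.r) * X.m : ℕ) : ℤ) + 2 * X.genus - 1 →
      (a ∈ X.toData.HhatS (X.Dtuple t ht) X.Pinf (X.Qt t ht) β ↔
        ∀ j : ℤ, j = (rtilde * (a - (((X.r - t) + (X.r1 - X.r) * X.m : ℕ) : ℤ) - t)) % (X.m : ℤ) →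
          ∑ i : Fin t, (⌊((β i + j + 1 : ℤ) : ℚ) / (X.m : ℚ)⌋ : ℚ)
            < ((X.r : ℚ) * j + (((X.r - t) + (X.r1 - X.r) * X.m : ℕ) : ℚ) + t - a)
                / (X.m : ℚ))) := by
  have hm : (0 : ℚ) < X.m := by exact_mod_cast X.m_pos
  rw [X.toData.mem_HhatS_iff X.Pinf_rational (X.Dtuple_rational ht) (X.Dtuple_ne_Pinf ht)
    (X.Gdiv_Pinf ht β) (fun i => Gdiv_apply_of_ne β (X.Dtuple_ne_Qt ht i))]
  simp only [forall_eq, Rat.floor_intCast_div_natCast]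
  constructor
  · rintro ⟨-, hlt⟩
    rw [and_iff_left (X.not_hasPole_of_lt ht β hlt), X.hasPole_iff ht β hrt rfl,
      div_le_iff₀' hm]
    norm_cast
  · rintro ⟨hle, -⟩
    have hlarge : X.HasPole X.Pinf (Gdiv (X.Qt t ht) β) a :=
      X.hasPole_of_large ht β hrt (le_trans (by exact_mod_cast hn) hle)
    rw [and_iff_right hlarge, X.hasPole_sub_D_iff ht, X.hasPole_iff ht _ hrt rfl, not_le,
      lt_div_iff₀' hm]
    set j := (rtilde * (a - (((X.r - t) + (X.r1 - X.r) * X.m : ℕ) : ℤ) - t)) % (X.m : ℤ)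
    have h1 : ∑ i, ((β + 1) i + j) / (X.m : ℤ) = ∑ i, (β i + j + 1) / (X.m : ℤ) :=
      Finset.sum_congr rfl fun i _ => by rw [Pi.add_apply, Pi.one_apply, add_right_comm]
    rw [h1, show X.r * j - (a - (((X.r - t) + (X.r1 - X.r) * X.m : ℕ) : ℤ) - t) =
      X.r * j + (((X.r - t) + (X.r1 - X.r) * X.m : ℕ) : ℤ) + t - a by ring]
    norm_cast
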